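/- Let L be a first-order language, α a type of variables with decidable equality, and M a nonempty L-structure. Let φ, ψ, ρ : L.Formula α. Suppose φ is satisfiable in M and φ and ρ are independent (their free-variable finsets are disjoint). Then the formulas φ ⊓ (ψ ⊔ ρ) and (φ ⊓ ψ) ⊔ ρ are equisatisfiable in M. -/

import Mathlib

open FirstOrder Language

/-! Since `φ` and `ρ` share no free variables, a realization of `φ` and one of `ρ` can be glued
along the free variables of `φ`. Hence, when `φ` is satisfiable, so is `φ ⊓ ρ` as soon as `ρ` is;
distributing `φ` over `ψ ⊔ ρ`, each side then asks for a realization of `φ ⊓ ψ` or one of `ρ`. -/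

section Independent

variable {L : FirstOrder.Language} {α M : Type*} [DecidableEq α] [L.Structure M] {m n : ℕ}

theorem realize_congr_of_eqOn_freeVarFinset (φ : L.BoundedFormula α n) {v w : α → M}
    (h : Set.EqOn v w φ.freeVarFinset) (xs : Fin n → M) : φ.Realize v xs ↔ φ.Realize w xs :=
  (BoundedFormula.realize_restrictFreeVar' subset_rfl).symm.trans
    (BoundedFormula.realize_restrictFreeVar w fun a ↦ h a.2)

theorem exists_realize_and_realize_iff_of_disjoint_freeVarFinset
    {φ : L.BoundedFormula α m} {ρ : L.BoundedFormula α n}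
    (hind : Disjoint φ.freeVarFinset ρ.freeVarFinset) (xs : Fin m → M) (ys : Fin n → M) :
    (∃ v : α → M, φ.Realize v xs ∧ ρ.Realize v ys) ↔
      (∃ v : α → M, φ.Realize v xs) ∧ ∃ v : α → M, ρ.Realize v ys := by
  refine ⟨fun ⟨v, hφ, hρ⟩ ↦ ⟨⟨v, hφ⟩, v, hρ⟩, fun ⟨⟨u, hu⟩, w, hw⟩ ↦ ?_⟩
  have eqOn_φ : Set.EqOn (φ.freeVarFinset.piecewise u w) u φ.freeVarFinset :=
    fun _ ha ↦ Finset.piecewise_eq_of_mem _ _ _ ha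
  have eqOn_ρ : Set.EqOn (φ.freeVarFinset.piecewise u w) w ρ.freeVarFinset :=
    fun _ ha ↦ Finset.piecewise_eq_of_notMem _ _ _ (Finset.disjoint_right.mp hind ha)
  exact ⟨φ.freeVarFinset.piecewise u w,
    (realize_congr_of_eqOn_freeVarFinset φ eqOn_φ xs).mpr hu,
    (realize_congr_of_eqOn_freeVarFinset ρ eqOn_ρ ys).mpr hw⟩

end Independent

/-- Lemma 3.1: if `φ` is satisfiable in `M` and `φ` and `ρ` are independent
(disjoint free-variable finsets), then `φ ⊓ (ψ ⊔ ρ)` and `(φ ⊓ ψ) ⊔ ρ` are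
equisatisfiable in `M`. -/
theorem independentSwap_equisat {L : FirstOrder.Language} {α : Type*} [DecidableEq α]
    {M : Type*} [Nonempty M] [L.Structure M]
    (φ ψ ρ : L.Formula α)
    (hφ : ∃ v : α → M, φ.Realize v)
    (hind : Disjoint (BoundedFormula.freeVarFinset φ) (BoundedFormula.freeVarFinset ρ)) :
    ((∃ v : α → M, (φ ⊓ (ψ ⊔ ρ)).Realize v) ↔ (∃ v : α → M, ((φ ⊓ ψ) ⊔ ρ).Realize v)) := by
  have hφρ : (∃ v : α → M, φ.Realize v ∧ ρ.Realize v) ↔ ∃ v : α → M, ρ.Realize v :=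
    (exists_realize_and_realize_iff_of_disjoint_freeVarFinset hind default default).trans
      (and_iff_right hφ)
  calc
    (∃ v : α → M, (φ ⊓ (ψ ⊔ ρ)).Realize v)
      ↔ (∃ v : α → M, φ.Realize v ∧ ψ.Realize v) ∨ ∃ v : α → M, φ.Realize v ∧ ρ.Realize v := by
        simp only [Formula.realize_inf, Formula.realize_sup, and_or_left, exists_or]
    _ ↔ (∃ v : α → M, φ.Realize v ∧ ψ.Realize v) ∨ ∃ v : α → M, ρ.Realize v :=
        or_congr_right hφρ
    _ ↔ ∃ v : α → M, ((φ ⊓ ψ) ⊔ ρ).Realize v := by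
        simp only [Formula.realize_inf, Formula.realize_sup, exists_or]
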